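/- (Theorem 1(i)) For every l ∈ ℤ and every x ∈ ℂ at which all the q-shifted-factorial denominators occurring in |x⟩ᵉ_l and |x⟩ᵒ_l are nonzero, one has the vector identity |x⟩ᵉ_l·u(qx) = q^l·|x⟩ᵒ_l·u(x) in ⊗^Lℂ^N; equivalently, |x⟩⁺_l = 2q^{−l}·|x⟩ᵉ_l·u(qx) = 2·|x⟩ᵒ_l·u(x). -/

import Mathlib

/-!
Write `N = 2M + 1` and `y_j = x c*_j`. In the component of index `k`, the coefficient `f^e(x, 2n)`
and the component of `|x, 2n⟩` telescope (`q² = ω`), leaving up to the common factor `q^(∑ k_j²)`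

  `∑_n ω^(ln) ∏_j F(y_j, n + 1 + k_j)`,  `F(y, m) = (y; ω⁻¹)_m / (y; ω)_m`,

for the even vector, and the same sum with `G(y, m) = (y q⁻¹; ω⁻¹)_m / (y q; ω)_m` for the odd one.
Nonvanishing of the denominators amounts to `y_j^N ≠ 1`; then `F(y, ·)` is `N`-periodic
(`ratio_periodic`), because `(y; ω)_N = 1 - y^N = (y; ω⁻¹)_N`. Since `q = ω^(M+1)`, shifting `m` by
`M + 1` turns `F` into a multiple of `G` (`ratio_shift`), and the ratio of the normalizations
`u(qx)` and `u(x)` is exactly the resulting constant. Shifting the summation index of the even sum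
by `M + 1` modulo `N` therefore produces the odd sum times `ω^(l(M+1)) = q^l`. The formulas for
`|x⟩⁺_l` follow by linearity.
-/

open Matrix Polynomial

noncomputable section

/-- The operator `Z` on `ℂ^N`: `(Zv)_k = ω^k v_k`. -/
def Zop (N : ℕ) (ω : ℂ) : Matrix (ZMod N) (ZMod N) ℂ :=
  Matrix.diagonal fun k => ω ^ k.val

/-- The operator `X` on `ℂ^N`: `(Xv)_k = v_{k-1}`. -/
def Xop (N : ℕ) : Matrix (ZMod N) (ZMod N) ℂ :=
  Matrix.of fun k k' => if k' = k - 1 then 1 else 0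

/-- The operator `Y := Z * X` on `ℂ^N`. -/
def Yop (N : ℕ) [NeZero N] (ω : ℂ) : Matrix (ZMod N) (ZMod N) ℂ :=
  Zop N ω * Xop N

/-- The `L`-operator `L_h(x)`, a 2×2 matrix of operators on `ℂ^N`, for
`h = (a,b,c,d) ∈ ℂ⁴`: first row `(aY, xbX)`, second row `(xcZ, d·I)`. -/
def Lop (N : ℕ) [NeZero N] (ω : ℂ) (h : ℂ × ℂ × ℂ × ℂ) (x : ℂ) :
    Matrix (Fin 2) (Fin 2) (Matrix (ZMod N) (ZMod N) ℂ) :=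
  Matrix.of
    ![![h.1 • Yop N ω, (x * h.2.1) • Xop N],
      ![(x * h.2.2.1) • Zop N ω, h.2.2.2 • (1 : Matrix (ZMod N) (ZMod N) ℂ)]]

/-- Embedding of an operator on `ℂ^N` as an operator on `⊗^L ℂ^N` acting on the `j`-th
tensor slot. -/
def emb (N L : ℕ) [NeZero N] [NeZero L] (j : ZMod L) (A : Matrix (ZMod N) (ZMod N) ℂ) :
    Matrix (ZMod L → ZMod N) (ZMod L → ZMod N) ℂ :=
  Matrix.of fun k k' =>
    A (k j) (k' j) * ∏ i ∈ Finset.univ.erase j, (if k i = k' i then (1 : ℂ) else 0)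

/-- The monodromy matrix `L_{h⃗}(x) = L_{h₀}(x) ⋯ L_{h_{L-1}}(x)`, a 2×2 matrix of
operators on `⊗^L ℂ^N`, the operator entries of the `j`-th factor acting on the
`j`-th tensor slot. -/
def mono (N L : ℕ) [NeZero N] [NeZero L] (ω : ℂ) (h : ZMod L → ℂ × ℂ × ℂ × ℂ) (x : ℂ) :
    Matrix (Fin 2) (Fin 2) (Matrix (ZMod L → ZMod N) (ZMod L → ZMod N) ℂ) :=
  ((List.finRange L).map fun j =>
    (Lop N ω (h ((j : ℕ) : ZMod L)) x).map (emb N L ((j : ℕ) : ZMod L))).prod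

/-- The transfer matrix `T_{h⃗}(x)`: the trace of the monodromy matrix over the 2×2
auxiliary indices. -/
def transfer (N L : ℕ) [NeZero N] [NeZero L] (ω : ℂ) (h : ZMod L → ℂ × ℂ × ℂ × ℂ)
    (x : ℂ) : Matrix (ZMod L → ZMod N) (ZMod L → ZMod N) ℂ :=
  mono N L ω h x 0 0 + mono N L ω h x 1 1

/-- The q-shifted factorial `(a; s)_n = (1−a)(1−as)⋯(1−as^{n−1})`. -/
def qsf (a s : ℂ) (n : ℕ) : ℂ :=
  ∏ i ∈ Finset.range n, (1 - a * s ^ i)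

/-- The vector `|x,l⟩ ∈ ⊗^Lℂ^N` with components
`⟨k₀,…,k_{L−1}|x,l⟩ = q^{Σk_j²} ∏_j (xc*_jq^{−l−2};ω⁻¹)_{k_j}/(xc*_jq^{l+2};ω)_{k_j}`. -/
def ket (N L : ℕ) [NeZero L] (ω q : ℂ) (cstar : ZMod L → ℂ) (x : ℂ) (l : ℤ) :
    (ZMod L → ZMod N) → ℂ :=
  fun k => q ^ (∑ j : ZMod L, ((k j).val) ^ 2) *
    ∏ j : ZMod L,
      qsf (x * cstar j * q ^ (-l - 2)) ω⁻¹ ((k j).val) /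
        qsf (x * cstar j * q ^ (l + 2)) ω ((k j).val)

/-- All denominators occurring in the components of `|x,l⟩` are nonzero. -/
def ketDefined (N L : ℕ) [NeZero L] (ω q : ℂ) (cstar : ZMod L → ℂ) (x : ℂ) (l : ℤ) :
    Prop :=
  ∀ (j : ZMod L) (n : ℕ), n < N → qsf (x * cstar j * q ^ (l + 2)) ω n ≠ 0

/-- `f^e(x,2n) = ∏_j (xc*_j;ω⁻¹)_{n+1}/(xc*_j;ω)_{n+1}`. -/
def fe (L : ℕ) [NeZero L] (ω : ℂ) (cstar : ZMod L → ℂ) (x : ℂ) (n : ℕ) : ℂ :=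
  ∏ j : ZMod L, qsf (x * cstar j) ω⁻¹ (n + 1) / qsf (x * cstar j) ω (n + 1)

/-- `f^o(x,2n+1) = ∏_j (xc*_jq⁻¹;ω⁻¹)_{n+1}/(xc*_jq;ω)_{n+1}`. -/
def fo (L : ℕ) [NeZero L] (ω q : ℂ) (cstar : ZMod L → ℂ) (x : ℂ) (n : ℕ) : ℂ :=
  ∏ j : ZMod L, qsf (x * cstar j * q⁻¹) ω⁻¹ (n + 1) / qsf (x * cstar j * q) ω (n + 1)

/-- `|x⟩ᵉ_l = Σ_{n=0}^{N−1} |x,2n⟩ f^e(x,2n) ω^{ln}`. -/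
def kete (N L : ℕ) [NeZero L] (ω q : ℂ) (cstar : ZMod L → ℂ) (x : ℂ) (l : ℤ) :
    (ZMod L → ZMod N) → ℂ :=
  ∑ n ∈ Finset.range N,
    (fe L ω cstar x n * ω ^ (l * (n : ℤ))) • ket N L ω q cstar x (2 * (n : ℤ))

/-- `|x⟩ᵒ_l = Σ_{n=0}^{N−1} |x,2n+1⟩ f^o(x,2n+1) ω^{ln}`. -/
def keto (N L : ℕ) [NeZero L] (ω q : ℂ) (cstar : ZMod L → ℂ) (x : ℂ) (l : ℤ) :
    (ZMod L → ZMod N) → ℂ :=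
  ∑ n ∈ Finset.range N,
    (fo L ω q cstar x n * ω ^ (l * (n : ℤ))) • ket N L ω q cstar x (2 * (n : ℤ) + 1)

/-- `u(x) = ∏_j (1−x^Nc*_j^N)(xc*_jq;q²)_M`. -/
def uu (N M L : ℕ) [NeZero L] (q : ℂ) (cstar : ZMod L → ℂ) (x : ℂ) : ℂ :=
  ∏ j : ZMod L, (1 - x ^ N * cstar j ^ N) * qsf (x * cstar j * q) (q ^ 2) M

/-- `|x⟩⁺_l = |x⟩ᵉ_l q^{−l} u(qx) + |x⟩ᵒ_l u(x)`. -/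
def ketp (N M L : ℕ) [NeZero L] (ω q : ℂ) (cstar : ZMod L → ℂ) (x : ℂ) (l : ℤ) :
    (ZMod L → ZMod N) → ℂ :=
  (q ^ (-l) * uu N M L q cstar (q * x)) • kete N L ω q cstar x l +
    uu N M L q cstar x • keto N L ω q cstar x l

/-- All the q-shifted-factorial denominators occurring in `|x⟩ᵉ_l`, `|x⟩ᵒ_l`
(hence in `|x⟩⁺_l`) are nonzero. -/
def allDef (N L : ℕ) [NeZero L] (ω q : ℂ) (cstar : ZMod L → ℂ) (x : ℂ) : Prop :=
  (∀ n : ℕ, n < N → ketDefined N L ω q cstar x (2 * (n : ℤ)) ∧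
      ketDefined N L ω q cstar x (2 * (n : ℤ) + 1)) ∧
  ∀ (j : ZMod L) (n : ℕ), n < N →
    qsf (x * cstar j) ω (n + 1) ≠ 0 ∧ qsf (x * cstar j * q) ω (n + 1) ≠ 0

/-- Splitting of a `q`-shifted factorial: `(a; s)_{m+n} = (a; s)_m (a s^m; s)_n`. -/
theorem qsf_add (a s : ℂ) (m n : ℕ) : qsf a s (m + n) = qsf a s m * qsf (a * s ^ m) s n := by
  simp only [qsf, Finset.prod_range_add, pow_add, mul_assoc]

theorem qsf_succ (a s : ℂ) (m : ℕ) : qsf a s (m + 1) = qsf a s m * (1 - a * s ^ m) := by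
  simp only [qsf, Finset.prod_range_succ]

/-- Over a full period the factors run through all `N`-th roots of unity. -/
theorem qsf_full {N : ℕ} (hN : 0 < N) {ζ : ℂ} (hζ : IsPrimitiveRoot ζ N) (y : ℂ) :
    qsf y ζ N = 1 - y ^ N := by
  have h := hζ.pow_sub_pow_eq_prod_sub_mul 1 y hN
  rw [one_pow] at h
  rw [h, qsf]
  refine Finset.prod_bij (fun i _ => ζ ^ i) ?_ ?_ ?_ ?_
  · intro i _
    rw [mem_nthRootsFinset hN, ← pow_mul, mul_comm, pow_mul, hζ.pow_eq_one, one_pow]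
  · intro i hi j hj hij
    exact hζ.pow_inj (Finset.mem_range.1 hi) (Finset.mem_range.1 hj) hij
  · intro b hb
    rw [mem_nthRootsFinset hN] at hb
    have : NeZero N := ⟨hN.ne'⟩
    obtain ⟨i, hi, rfl⟩ := hζ.eq_pow_of_pow_eq_one hb
    exact ⟨i, Finset.mem_range.2 hi, rfl⟩
  · intro i _
    ring

/-- If `y ^ N ≠ 1`, no factor of `(y; ω)_m` vanishes, for any `m`. -/
theorem one_sub_ne_zero {N : ℕ} {ω y : ℂ} (hω : ω ^ N = 1) (hy : y ^ N ≠ 1) (i : ℕ) :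
    1 - y * ω ^ i ≠ 0 := by
  intro h
  apply hy
  have h1 : y * ω ^ i = 1 := by linear_combination -h
  have h2 := congrArg (· ^ N) h1
  simpa [mul_pow, ← pow_mul, mul_comm i N, pow_mul ω N i, hω] using h2

theorem qsf_ne_zero {N : ℕ} {ω y : ℂ} (hω : ω ^ N = 1) (hy : y ^ N ≠ 1) (m : ℕ) :
    qsf y ω m ≠ 0 :=
  Finset.prod_ne_zero_iff.2 fun i _ => one_sub_ne_zero hω hy i

/-- The ratio `(y; ω⁻¹)_m / (y; ω)_m` is `N`-periodic in `m`. -/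
theorem ratio_periodic {N : ℕ} (hN : 0 < N) {ω y : ℂ} (hω : IsPrimitiveRoot ω N)
    (hy : y ^ N ≠ 1) (m : ℕ) :
    qsf y ω⁻¹ (m + N) / qsf y ω (m + N) = qsf y ω⁻¹ m / qsf y ω m := by
  rw [add_comm m N, qsf_add, qsf_add, qsf_full hN hω, qsf_full hN hω.inv, hω.pow_eq_one,
    hω.inv.pow_eq_one, mul_one, mul_div_mul_left]
  exact sub_ne_zero.2 (Ne.symm hy)

/-- The single-site identity: the odd ratio at `m` is proportional to the even ratio at
`m + (M + 1)`, the shift by `M + 1` being multiplication by `q = ω^(M+1)`. -/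
theorem ratio_shift (M : ℕ) {ω q y : ℂ} (hω : IsPrimitiveRoot ω (2 * M + 1))
    (hq : q = ω ^ (M + 1)) (hy : y ^ (2 * M + 1) ≠ 1) (m : ℕ) :
    qsf (y * ω) ω M * (qsf y ω⁻¹ (m + (M + 1)) / qsf y ω (m + (M + 1))) =
      qsf (y * q) ω M * (qsf (y * q⁻¹) ω⁻¹ m / qsf (y * q) ω m) := by
  have hω0 : ω ≠ 0 := hω.ne_zero (by omega)
  induction m with
  | zero =>
    have h1 : qsf y ω (0 + (M + 1)) = (1 - y) * qsf (y * ω) ω M := by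
      rw [zero_add, add_comm M 1, qsf_add]
      simp [qsf]
    have h2 : qsf y ω⁻¹ (0 + (M + 1)) = (1 - y) * qsf (y * ω⁻¹) ω⁻¹ M := by
      rw [zero_add, add_comm M 1, qsf_add]
      simp [qsf]
    -- the exponents `-1, …, -M` and `2M, …, M+1` agree modulo `N`
    have h3 : qsf (y * ω⁻¹) ω⁻¹ M = qsf (y * q) ω M := by
      unfold qsf
      rw [← Finset.prod_range_reflect]
      refine Finset.prod_congr rfl fun i hi => ?_
      have hi' := Finset.mem_range.1 hi
      have : ω⁻¹ * ω⁻¹ ^ (M - 1 - i) = q * ω ^ i := by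
        rw [hq, ← pow_succ', ← pow_add, inv_pow, inv_eq_iff_eq_inv, eq_comm,
          inv_eq_of_mul_eq_one_left]
        rw [← pow_add, ← hω.pow_eq_one]
        congr 1
        omega
      rw [mul_assoc, this, mul_assoc]
    have h4 : qsf y ω (0 + (M + 1)) ≠ 0 := qsf_ne_zero hω.pow_eq_one hy _
    rw [h1] at h4
    rw [h1, h2, h3]
    have h5 := left_ne_zero_of_mul h4
    have h6 := right_ne_zero_of_mul h4
    simp only [qsf, Finset.prod_range_zero] at h6 ⊢
    field_simp
  | succ m ih =>
    have e : y * ω ^ (m + (M + 1)) = y * q * ω ^ m := by rw [hq]; ring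
    have e' : y * ω⁻¹ ^ (m + (M + 1)) = y * q⁻¹ * ω⁻¹ ^ m := by
      rw [hq, ← inv_pow]; ring
    rw [add_right_comm, qsf_succ, qsf_succ, qsf_succ, qsf_succ, mul_div_mul_comm,
      mul_div_mul_comm, ← mul_assoc, ih, e, e', mul_assoc]

/-- The sum of an `N`-periodic sequence over a period does not depend on its starting point. -/
theorem sum_range_periodic {N : ℕ} (g : ℕ → ℂ) (hg : ∀ n, g (n + N) = g n) (s : ℕ) :
    ∑ n ∈ Finset.range N, g (n + s) = ∑ n ∈ Finset.range N, g n := by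
  induction s with
  | zero => rfl
  | succ s ih =>
    rw [← ih]
    have h := Finset.sum_range_succ (fun n => g (n + s)) N
    rw [Finset.sum_range_succ', zero_add, add_comm N s, hg] at h
    simpa [add_right_comm, add_assoc, add_comm 1 s] using add_right_cancel h

/-- Components of the even vector: the coefficient `f^e(x, 2n)` and the component of `|x, 2n⟩`
merge into shifted factorials of length `n + 1 + k_j`. -/
theorem kete_apply {N L : ℕ} [NeZero L] {ω q : ℂ} (hq2 : q ^ 2 = ω)
    (cstar : ZMod L → ℂ) (x : ℂ) (l : ℤ) (k : ZMod L → ZMod N) :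
    kete N L ω q cstar x l k = q ^ (∑ j : ZMod L, ((k j).val) ^ 2) *
      ∑ n ∈ Finset.range N, ω ^ (l * (n : ℤ)) * ∏ j : ZMod L,
        qsf (x * cstar j) ω⁻¹ (n + 1 + (k j).val) / qsf (x * cstar j) ω (n + 1 + (k j).val) := by
  simp only [kete, Finset.sum_apply, Pi.smul_apply, smul_eq_mul, ket, fe, Finset.mul_sum]
  refine Finset.sum_congr rfl fun n _ => ?_
  have e1 : q ^ (-(2 * (n : ℤ)) - 2) = ω⁻¹ ^ (n + 1) := by
    rw [← hq2, inv_pow, ← pow_mul, ← zpow_natCast, ← _root_.zpow_neg]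
    congr 1; push_cast; ring
  have e2 : q ^ (2 * (n : ℤ) + 2) = ω ^ (n + 1) := by
    rw [← hq2, ← pow_mul, ← zpow_natCast]
    congr 1
  simp only [e1, e2, qsf_add _ _ (n + 1), mul_div_mul_comm, Finset.prod_mul_distrib]
  ring

/-- Odd analogue of `kete_apply`. -/
theorem keto_apply {N L : ℕ} [NeZero L] {ω q : ℂ} (hq2 : q ^ 2 = ω)
    (cstar : ZMod L → ℂ) (x : ℂ) (l : ℤ) (k : ZMod L → ZMod N) :
    keto N L ω q cstar x l k = q ^ (∑ j : ZMod L, ((k j).val) ^ 2) *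
      ∑ n ∈ Finset.range N, ω ^ (l * (n : ℤ)) * ∏ j : ZMod L,
        qsf (x * cstar j * q⁻¹) ω⁻¹ (n + 1 + (k j).val) /
          qsf (x * cstar j * q) ω (n + 1 + (k j).val) := by
  simp only [keto, Finset.sum_apply, Pi.smul_apply, smul_eq_mul, ket, fo, Finset.mul_sum]
  refine Finset.sum_congr rfl fun n _ => ?_
  have e1 : q ^ (-(2 * (n : ℤ) + 1) - 2) = q⁻¹ * ω⁻¹ ^ (n + 1) := by
    rw [← hq2, inv_pow, ← pow_mul, ← mul_inv, ← pow_succ', ← zpow_natCast, ← _root_.zpow_neg]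
    congr 1
  have e2 : q ^ (2 * (n : ℤ) + 1 + 2) = q * ω ^ (n + 1) := by
    rw [← hq2, ← pow_mul, ← pow_succ', ← zpow_natCast]
    congr 1
  simp only [e1, e2, ← mul_assoc, qsf_add _ _ (n + 1), mul_div_mul_comm,
    Finset.prod_mul_distrib]
  ring

/-- Theorem 1(i): wherever all q-shifted-factorial denominators of
`|x⟩ᵉ_l` and `|x⟩ᵒ_l` are nonzero, `|x⟩ᵉ_l·u(qx) = q^l·|x⟩ᵒ_l·u(x)`; equivalently
`|x⟩⁺_l = 2q^{−l}|x⟩ᵉ_l·u(qx) = 2|x⟩ᵒ_l·u(x)`. -/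
theorem kete_keto_relation (M L : ℕ) [NeZero L] (hM : 1 ≤ M) (ω : ℂ)
    (hω : IsPrimitiveRoot ω (2 * M + 1)) (q : ℂ) (hq : q = ω ^ (M + 1))
    (cstar : ZMod L → ℂ) (hcs : ∀ j, cstar j ≠ 0) (x : ℂ) (l : ℤ)
    (hdef : allDef (2 * M + 1) L ω q cstar x) :
    uu (2 * M + 1) M L q cstar (q * x) • kete (2 * M + 1) L ω q cstar x l =
      (q ^ l * uu (2 * M + 1) M L q cstar x) • keto (2 * M + 1) L ω q cstar x l ∧
    ketp (2 * M + 1) M L ω q cstar x l =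
      (2 * q ^ (-l) * uu (2 * M + 1) M L q cstar (q * x)) •
        kete (2 * M + 1) L ω q cstar x l ∧
    ketp (2 * M + 1) M L ω q cstar x l =
      (2 * uu (2 * M + 1) M L q cstar x) • keto (2 * M + 1) L ω q cstar x l := by
  have hN : 0 < 2 * M + 1 := by omega
  have hω0 : ω ≠ 0 := hω.ne_zero hN.ne'
  have hq0 : q ≠ 0 := hq ▸ pow_ne_zero _ hω0
  have hω1 : ω ^ (2 * M + 1) = 1 := hω.pow_eq_one
  have hq2 : q ^ 2 = ω := by
    rw [hq, ← pow_mul, show (M + 1) * 2 = (2 * M + 1) + 1 by ring, pow_succ, hω1, one_mul]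
  have hqN : q ^ (2 * M + 1) = 1 := by
    rw [hq, ← pow_mul, mul_comm, pow_mul, hω1, one_pow]
  have hy : ∀ j, (x * cstar j) ^ (2 * M + 1) ≠ 1 := by
    intro j h
    have h1 := (hdef.2 j (2 * M) (by omega)).1
    rw [qsf_full hN hω, h, sub_self] at h1
    exact h1 rfl
  have main : uu (2 * M + 1) M L q cstar (q * x) • kete (2 * M + 1) L ω q cstar x l =
      (q ^ l * uu (2 * M + 1) M L q cstar x) • keto (2 * M + 1) L ω q cstar x l := by
    ext k
    rw [Pi.smul_apply, Pi.smul_apply, kete_apply hq2, keto_apply hq2, smul_eq_mul,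
      smul_eq_mul]
    -- move the even summation index by `M + 1`
    rw [← sum_range_periodic _ (fun n => ?per) (M + 1)]
    case per =>
      congr 1
      · rw [Nat.cast_add, mul_add, zpow_add₀ hω0, mul_comm l ((2 * M + 1 : ℕ) : ℤ),
          _root_.zpow_mul ω ((2 * M + 1 : ℕ) : ℤ), zpow_natCast ω (2 * M + 1), hω1, _root_.one_zpow, mul_one]
      · refine Finset.prod_congr rfl fun j _ => ?_
        rw [show n + (2 * M + 1) + 1 + (k j).val = n + 1 + (k j).val + (2 * M + 1) by ring]
        exact ratio_periodic hN hω (hy j) _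
    rw [mul_left_comm, mul_left_comm (q ^ l * _)]
    congr 1
    rw [Finset.mul_sum, Finset.mul_sum]
    refine Finset.sum_congr rfl fun n _ => ?_
    have hl : ω ^ (l * ((n + (M + 1) : ℕ) : ℤ)) = q ^ l * ω ^ (l * (n : ℤ)) := by
      rw [hq, ← zpow_natCast ω (M + 1), ← _root_.zpow_mul, ← zpow_add₀ hω0]
      congr 1; push_cast; ring
    have hprod : uu (2 * M + 1) M L q cstar (q * x) * (∏ j : ZMod L,
          qsf (x * cstar j) ω⁻¹ (n + (M + 1) + 1 + (k j).val) /
            qsf (x * cstar j) ω (n + (M + 1) + 1 + (k j).val)) =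
        uu (2 * M + 1) M L q cstar x * ∏ j : ZMod L,
          qsf (x * cstar j * q⁻¹) ω⁻¹ (n + 1 + (k j).val) /
            qsf (x * cstar j * q) ω (n + 1 + (k j).val) := by
      simp only [uu, ← Finset.prod_mul_distrib]
      refine Finset.prod_congr rfl fun j _ => ?_
      have h := ratio_shift M hω hq (hy j) (n + 1 + (k j).val)
      rw [show n + (M + 1) + 1 + (k j).val = n + 1 + (k j).val + (M + 1) by ring, mul_pow q x,
        hqN, one_mul, hq2, show q * x * cstar j * q = x * cstar j * ω by rw [← hq2]; ring,
        mul_assoc (1 - _), h, ← mul_assoc]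
    rw [hl]
    linear_combination q ^ l * ω ^ (l * (n : ℤ)) * hprod
  have hql : q ^ (-l) * q ^ l = 1 := by rw [← zpow_add₀ hq0]; simp
  have main' := congrArg (fun v => q ^ (-l) • v) main
  simp only [smul_smul, ← mul_assoc, hql, one_mul] at main'
  refine ⟨main, ?_, ?_⟩
  · rw [ketp, ← main', ← add_smul]
    congr 1; ring
  · rw [ketp, main', ← add_smul]
    congr 1; ring

end
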